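/- Rank of the interpolation matrix: Let c^(i) = (f^(i)(g_0),…,f^(i)(g_{n−1})) for linearized polynomials f^(i) with deg_q f^(i) < k^(i), let r^(i) = c^(i) + e^(i) for i = 1,…,s, and let t be the rank of the s×n matrix over 𝔽_{q^m} with rows e^(1),…,e^(s). Let τ be a nonnegative integer with τ + k^(i) ≤ n for all i, and let R be the n × (n−τ + Σ_{i=1}^s (n−τ−k^(i)+1)) matrix over 𝔽_{q^m} obtained by horizontally concatenating qvan_{n−τ}(g)^T, qvan_{n−τ−k^(1)+1}(r^(1))^T, …, qvan_{n−τ−k^(s)+1}(r^(s))^T. Then the rank of R over 𝔽_{q^m} is at most n − τ + t; consequently the 𝔽_{q^m}-dimension of the right kernel of R is at least s·(n−τ+1) − Σ_{i=1}^s k^(i) − t. -/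

import Mathlib

/-!
Let `φ` be the `q`-power Frobenius, an `𝔽_q`-algebra endomorphism of `K`. The column of `R` indexed
by `(i, p)` is `φ^p` applied entrywise to `c⁽ⁱ⁾ + e⁽ⁱ⁾`.

* Since `c⁽ⁱ⁾` evaluates a linearized polynomial of `q`-degree `< k⁽ⁱ⁾` at `g`, its image under
  `φ^p` is a combination of the vectors `φ^h(g)` with `h < k⁽ⁱ⁾ + p ≤ n - τ`, which are columns of
  the first block.
* The error matrix factors as `E = A B` with `A` an `s × t` matrix over `K` and `B` a `t × n` matrix
  over `𝔽_q` (`exists_rank_factorization`). As `φ` fixes `𝔽_q`, the image of `e⁽ⁱ⁾` under `φ^p` is a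
  combination of the rows of the *same* `B`, for every `p`.

So the `n - τ` columns of the first block and the `t` rows of `B` together span a space containing
the column space of `R`. The bound on the kernel is rank-nullity.
-/

/-- Evaluation of the linearized polynomial with coefficient sequence `c`
(finitely supported) at `x`: `∑ i, c i * x ^ (q ^ i)`. -/
noncomputable def qEval {K : Type*} [Field K] (q : ℕ) (c : ℕ → K) (x : K) : K :=
  ∑ᶠ i, c i * x ^ q ^ i

/-- The `𝔽_q`-rank of a matrix over the extension field `K`. -/
noncomputable def rankFq (Fq : Type*) {K : Type*} [Field Fq] [Field K] [Algebra Fq K]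
    {s n : ℕ} (E : Matrix (Fin s) (Fin n) K) : ℕ :=
  Module.finrank Fq (Submodule.span Fq (Set.range fun j : Fin n => fun i : Fin s => E i j))

/-- A matrix of `𝔽_q`-rank `t` factors through `𝔽_q^t`, the right-hand factor having entries in
`𝔽_q`: its columns are the coordinates of the columns of `E` in a basis of their
`𝔽_q`-span. -/
theorem exists_rank_factorization (Fq : Type*) {K : Type*} [Field Fq] [Field K] [Algebra Fq K]
    {s n : ℕ} (E : Matrix (Fin s) (Fin n) K) {t : ℕ} (ht : rankFq Fq E = t) :
    ∃ (A : Fin s → Fin t → K) (B : Fin t → Fin n → Fq),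
      ∀ i j, E i j = ∑ a, B a j • A i a := by
  let S := Submodule.span Fq (Set.range fun j : Fin n => fun i : Fin s => E i j)
  have : FiniteDimensional Fq S := FiniteDimensional.span_of_finite Fq (Set.finite_range _)
  let b : Module.Basis (Fin t) Fq S := Module.finBasisOfFinrankEq Fq S ht
  let v : Fin n → S := fun j => ⟨fun i => E i j, Submodule.subset_span ⟨j, rfl⟩⟩
  refine ⟨fun i a => (b a : Fin s → K) i, fun a j => b.repr (v j) a, fun i j => ?_⟩
  have h := congrArg (fun x : S => (x : Fin s → K) i) (b.sum_repr (v j))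
  simp only [Submodule.coe_sum, Submodule.coe_smul, Finset.sum_apply, Pi.smul_apply] at h
  exact h.symm

/-- Evaluation of a linearized polynomial with `q`-degree `< k` as a genuine finite sum. -/
theorem qEval_eq_sum {K : Type*} [Field K] (q : ℕ) (c : ℕ → K) {k : ℕ}
    (hc : ∀ j, k ≤ j → c j = 0) (x : K) :
    qEval q c x = ∑ h ∈ Finset.range k, c h * x ^ q ^ h := by
  refine finsum_eq_sum_of_support_subset _ fun h hh => ?_
  by_contra hk
  exact hh (by simp [hc h (by simpa using hk)])

theorem interpolation_matrix_rank
    (Fq K : Type) [Field Fq] [Fintype Fq] [Field K] [Fintype K] [Algebra Fq K]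
    (q m n s : ℕ) (hq : q = Fintype.card Fq) (hm : Module.finrank Fq K = m) (hnm : n ≤ m)
    (g : Fin n → K) (hg : LinearIndependent Fq g)
    (k : Fin s → ℕ) (τ : ℕ) (hτk : ∀ i, τ + k i ≤ n)
    (f : Fin s → ℕ → K) (hf : ∀ i j, k i ≤ j → f i j = 0)
    (e r : Fin s → Fin n → K)
    (hr : ∀ i j, r i j = qEval q (f i) (g j) + e i j)
    (t : ℕ) (ht : rankFq Fq (Matrix.of fun i j => e i j) = t)
    -- R = [ qvan_{n−τ}(g)ᵀ | qvan_{n−τ−k⁽¹⁾+1}(r⁽¹⁾)ᵀ | … | qvan_{n−τ−k⁽ˢ⁾+1}(r⁽ˢ⁾)ᵀ ]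
    (R : Matrix (Fin n) (Fin (n - τ) ⊕ ((i : Fin s) × Fin (n - τ - k i + 1))) K)
    (hR : ∀ j c, R j c = Sum.elim
      (fun l : Fin (n - τ) => g j ^ q ^ (l : ℕ))
      (fun p : (i : Fin s) × Fin (n - τ - k i + 1) => r p.1 j ^ q ^ (p.2 : ℕ)) c) :
    R.rank ≤ n - τ + t ∧
      (s : ℤ) * ((n : ℤ) - τ + 1) - (∑ i, (k i : ℤ)) - t ≤
        (Module.finrank K (LinearMap.ker R.mulVecLin) : ℤ) := by
  obtain ⟨A, B, hAB⟩ := exists_rank_factorization Fq _ ht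
  have hφ : ∀ (p : ℕ) (x : K), (FiniteField.frobeniusAlgHom Fq K ^ p) x = x ^ q ^ p := by
    intro p x
    rw [AlgHom.coe_pow, FiniteField.coe_frobeniusAlgHom, pow_iterate, hq]
  let w : Fin (n - τ) ⊕ Fin t → Fin n → K :=
    Sum.elim (fun l j => g j ^ q ^ (l : ℕ)) (fun a j => algebraMap Fq K (B a j))
  have hcol : ∀ c, R.col c ∈ Submodule.span K (Set.range w) := by
    rintro (l | ⟨i, p⟩)
    · refine Submodule.subset_span ⟨Sum.inl l, ?_⟩
      ext j
      simp [w, hR]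
    · have hki := hτk i
      have hp := p.2
      have key : R.col (Sum.inr ⟨i, p⟩) =
          (∑ h ∈ Finset.range (k i), f i h ^ q ^ (p : ℕ) • fun j => g j ^ q ^ (h + p : ℕ)) +
            ∑ a, A i a ^ q ^ (p : ℕ) • w (Sum.inr a) := by
        ext j
        have he : e i j = ∑ a, B a j • A i a := hAB i j
        simp only [Matrix.col_apply, hR, Sum.elim_inr, hr, he, qEval_eq_sum q (f i) (hf i),
          Pi.add_apply, Finset.sum_apply, Pi.smul_apply, smul_eq_mul, w]
        rw [← hφ, map_add, map_sum, map_sum]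
        congr 1
        · refine Finset.sum_congr rfl fun h _ => ?_
          rw [hφ, mul_pow, ← pow_mul, ← pow_add]
        · refine Finset.sum_congr rfl fun a _ => ?_
          rw [map_smul, hφ, Algebra.smul_def, mul_comm]
      rw [key]
      refine add_mem (sum_mem fun h hh => Submodule.smul_mem _ _ ?_)
        (sum_mem fun a _ => Submodule.smul_mem _ _ (Submodule.subset_span ⟨_, rfl⟩))
      have hh' := Finset.mem_range.mp hh
      exact Submodule.subset_span ⟨Sum.inl ⟨h + p, by omega⟩, rfl⟩
  have hrank : R.rank ≤ n - τ + t := by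
    rw [Matrix.rank_eq_finrank_span_cols]
    refine (Submodule.finrank_mono (Submodule.span_le.mpr ?_)).trans
      ((finrank_range_le_card w).trans (by simp))
    rintro _ ⟨c, rfl⟩
    exact hcol c
  refine ⟨hrank, ?_⟩
  have hrn := LinearMap.finrank_range_add_finrank_ker R.mulVecLin
  change R.rank + _ = _ at hrn
  simp only [Module.finrank_fintype_fun_eq_card, Fintype.card_sum, Fintype.card_sigma,
    Fintype.card_fin] at hrn
  have hsum : ((∑ i, (n - τ - k i + 1) : ℕ) : ℤ) =
      (s : ℤ) * ((n : ℤ) - τ + 1) - ∑ i, (k i : ℤ) := by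
    have hi : ∀ i, ((n - τ - k i + 1 : ℕ) : ℤ) = ((n : ℤ) - τ + 1) - k i := by
      intro i
      have := hτk i
      omega
    rw [Nat.cast_sum, Finset.sum_congr rfl fun i _ => hi i, Finset.sum_sub_distrib]
    simp
  omega
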